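/- The lemniscate constant satisfies arcsl(1) = (1/4)·B(1/4, 1/2), where B is the Euler beta function; equivalently arcsl(1) = Γ(1/4)²/(4√(2π)). -/

import Mathlib

/-- The arc lemniscate sine function: `arcsl x = ∫₀ˣ dt / √(1 - t⁴)`. -/
noncomputable def arcsl (x : ℝ) : ℝ := ∫ t in (0:ℝ)..x, 1 / Real.sqrt (1 - t ^ 4)

/-- The Euler beta function: `B(x, y) = ∫₀¹ t^(x-1) (1-t)^(y-1) dt`. -/
noncomputable def eulerBeta (x y : ℝ) : ℝ :=
  ∫ t in (0:ℝ)..1, t ^ (x - 1) * (1 - t) ^ (y - 1)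

/-!
The substitution `u = t ^ p` turns `∫₀¹ dt / √(1 - t ^ p)` into `p⁻¹ B(1/p, 1/2)`; the lemniscate
is the case `p = 4`. Euler's formula for the beta function in terms of `Γ`, combined with Legendre's
duplication formula, gives `B(x, 1/2) = 2 ^ (2x - 1) Γ(x)² / Γ(2x)`. At `x = 1/4` the denominator is
`Γ(1/2) = √π`, which is why only `Γ(1/4)` survives.
-/

theorem integral_comp_rpow_of_pos {E : Type*} [NormedAddCommGroup E] [NormedSpace ℝ E]
    (g : ℝ → E) {p a b : ℝ} (hp : 0 < p) (ha : 0 ≤ a) (hb : 0 ≤ b) :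
    ∫ t in a..b, (p * t ^ (p - 1)) • g (t ^ p) = ∫ u in a ^ p..b ^ p, g u := by
  have pos_of_mem {t : ℝ} (ht : t ∈ Set.Ioo (min a b) (max a b)) : 0 < t :=
    (le_min ha hb).trans_lt ht.1
  exact intervalIntegral.integral_deriv_smul_comp_of_deriv_nonneg
    (Real.continuous_rpow_const hp.le).continuousOn
    (fun t ht ↦ Real.hasDerivAt_rpow_const (.inl (pos_of_mem ht).ne'))
    (fun t ht ↦ mul_nonneg hp.le (Real.rpow_nonneg (pos_of_mem ht).le _))

theorem integral_rpow_mul_one_sub_rpow_rpow {p : ℝ} (hp : 0 < p) (x y : ℝ) :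
    ∫ t in (0 : ℝ)..1, t ^ (p * x - 1) * (1 - t ^ p) ^ (y - 1) = p⁻¹ * eulerBeta x y := by
  have substitution := integral_comp_rpow_of_pos (fun u ↦ u ^ (x - 1) * (1 - u) ^ (y - 1))
    hp le_rfl zero_le_one
  rw [Real.zero_rpow hp.ne', Real.one_rpow] at substitution
  rw [eulerBeta, ← substitution, ← intervalIntegral.integral_const_mul]
  refine intervalIntegral.integral_congr_Ioo_of_le zero_le_one fun t ht ↦ ?_
  have rpow_split : t ^ (p * x - 1) = t ^ (p - 1) * (t ^ p) ^ (x - 1) := by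
    rw [← Real.rpow_mul ht.1.le, ← Real.rpow_add ht.1]
    ring_nf
  simp only [smul_eq_mul, rpow_split]
  field_simp

theorem integral_one_div_sqrt_one_sub_rpow {p : ℝ} (hp : 0 < p) :
    ∫ t in (0 : ℝ)..1, 1 / √(1 - t ^ p) = 1 / p * eulerBeta (1 / p) (1 / 2) := by
  rw [one_div p, ← integral_rpow_mul_one_sub_rpow_rpow hp]
  refine intervalIntegral.integral_congr_Ioo_of_le zero_le_one fun t ht ↦ ?_
  have one_sub_nonneg : 0 ≤ 1 - t ^ p := sub_nonneg.2 (Real.rpow_le_one ht.1.le ht.2.le hp.le)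
  calc 1 / √(1 - t ^ p) = (1 - t ^ p) ^ (-(1 / 2) : ℝ) := by
        rw [Real.rpow_neg one_sub_nonneg, ← Real.sqrt_eq_rpow, one_div]
    _ = t ^ (p * p⁻¹ - 1) * (1 - t ^ p) ^ (1 / 2 - 1 : ℝ) := by
        rw [mul_inv_cancel₀ hp.ne', sub_self, Real.rpow_zero, one_mul]
        norm_num

theorem ofReal_eulerBeta (x y : ℝ) : (eulerBeta x y : ℂ) = Complex.betaIntegral x y := by
  rw [eulerBeta, Complex.betaIntegral, ← intervalIntegral.integral_ofReal]
  refine intervalIntegral.integral_congr_Ioo_of_le zero_le_one fun t ht ↦ ?_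
  simp only [Complex.ofReal_mul, Complex.ofReal_cpow ht.1.le,
    Complex.ofReal_cpow (sub_nonneg.2 ht.2.le), Complex.ofReal_sub, Complex.ofReal_one]

theorem eulerBeta_eq_Gamma_mul_Gamma_div {x y : ℝ} (hx : 0 < x) (hy : 0 < y) :
    eulerBeta x y = Real.Gamma x * Real.Gamma y / Real.Gamma (x + y) := by
  rw [← ProbabilityTheory.beta, ProbabilityTheory.beta_eq_betaIntegralReal x y hx hy,
    ← ofReal_eulerBeta, Complex.ofReal_re]

theorem eulerBeta_one_half_right {x : ℝ} (hx : 0 < x) :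
    eulerBeta x (1 / 2) = 2 ^ (2 * x - 1) * Real.Gamma x ^ 2 / Real.Gamma (2 * x) := by
  have duplication : Real.Gamma x * Real.Gamma (x + 1 / 2) * 2 ^ (2 * x - 1) =
      Real.Gamma (2 * x) * √Real.pi := by
    have two_rpow_cancel : (2 : ℝ) ^ (1 - 2 * x) * 2 ^ (2 * x - 1) = 1 := by
      rw [← Real.rpow_add two_pos, sub_add_sub_cancel, sub_self, Real.rpow_zero]
    rw [Real.Gamma_mul_Gamma_add_half]
    linear_combination Real.Gamma (2 * x) * √Real.pi * two_rpow_cancel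
  rw [eulerBeta_eq_Gamma_mul_Gamma_div hx one_half_pos, Real.Gamma_one_half_eq,
    div_eq_div_iff (by positivity) (by positivity)]
  linear_combination -Real.Gamma x * duplication

theorem eulerBeta_one_fourth_one_half :
    eulerBeta (1 / 4) (1 / 2) = Real.Gamma (1 / 4) ^ 2 / √(2 * Real.pi) := by
  have two_mul_one_fourth : (2 * (1 / 4) : ℝ) = 1 / 2 := by norm_num
  have two_rpow : (2 : ℝ) ^ (1 / 2 - 1 : ℝ) = (√2)⁻¹ := by
    rw [Real.sqrt_eq_rpow, ← Real.rpow_neg zero_le_two]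
    norm_num
  rw [eulerBeta_one_half_right (by norm_num), two_mul_one_fourth, two_rpow,
    Real.Gamma_one_half_eq, Real.sqrt_mul zero_le_two]
  field_simp

theorem arcsl_one_eq :
    arcsl 1 = (1 / 4) * eulerBeta (1 / 4) (1 / 2) ∧
      arcsl 1 = Real.Gamma (1 / 4) ^ 2 / (4 * Real.sqrt (2 * Real.pi)) := by
  have arcsl_one_eq_eulerBeta : arcsl 1 = (1 / 4) * eulerBeta (1 / 4) (1 / 2) := by
    simpa only [arcsl, Real.rpow_ofNat] using integral_one_div_sqrt_one_sub_rpow four_pos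
  refine ⟨arcsl_one_eq_eulerBeta, ?_⟩
  rw [arcsl_one_eq_eulerBeta, eulerBeta_one_fourth_one_half, div_mul_div_comm, one_mul]
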